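/- Let z₁, z₂, z₃ be points in the Euclidean plane (EuclideanSpace ℝ (Fin 2)) and r₁, r₂, r₃ > 0 real numbers such that dist(z_i, z_j) = r_i + r_j for all i ≠ j (three pairwise externally tangent circles). For i ≠ j let p_{ij} = z_i + (r_i/(r_i+r_j)) • (z_j − z_i) be the tangency point of the i-th and j-th circles. Then there exists a unique pair (c, ρ) with c in the plane and ρ > 0 such that: (1) dist(c, p_{ij}) = ρ for each of the three tangency points p_{12}, p_{13}, p_{23}, and (2) dist(c, z_i)^2 = ρ^2 + r_i^2 for each i = 1, 2, 3. That is, there is a unique circle orthogonal to all three circles, intersecting them exactly at their points of tangency. -/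

import Mathlib

/-!
The centre of the dual circle is the radical centre `c` of the three circles. No centre `z i` lies
between the other two, so the centres are affinely independent; this makes the linear system for
`c` solvable, with a unique solution in their affine span. By Stewart's theorem the common power `k`
of `c` is its squared distance to every tangency point, so the radius must be `√k`. For `n` mutually
tangent spheres, expanding `0 ≤ ‖∑ i, (z i - c) / r i‖ ^ 2` gives
`n * (n - 2) ≤ k * (∑ i, 1 / r i) ^ 2`, hence `0 < k` as soon as `2 < n`.
-/

open Set Finset Submodule AffineMap
open scoped RealInnerProductSpace

section

variable {V P ι : Type*} [NormedAddCommGroup V] [InnerProductSpace ℝ V] [MetricSpace P]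
  [NormedAddTorsor V P]

theorem exists_mem_span_inner_eq [Finite ι] {v : ι → V} (hv : LinearIndependent ℝ v)
    (a : ι → ℝ) : ∃ x ∈ span ℝ (range v), ∀ i, ⟪x, v i⟫ = a i := by
  have : FiniteDimensional ℝ (span ℝ (range v)) := .span_of_finite ℝ (finite_range v)
  let b := Module.Basis.span hv
  let x := (InnerProductSpace.toDual ℝ _).symm (b.constr ℝ a).toContinuousLinearMap
  refine ⟨x, x.2, fun i ↦ ?_⟩
  calc ⟪(x : V), v i⟫ = ⟪x, b i⟫ := by rw [coe_inner, Module.Basis.span_apply]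
    _ = a i := by
      rw [InnerProductSpace.toDual_symm_apply, LinearMap.coe_toContinuousLinearMap',
        Module.Basis.constr_basis]

theorem exists_mem_affineSpan_dist_sq_eq_add [Finite ι] [Nonempty ι] {z : ι → P}
    (hz : AffineIndependent ℝ z) (w : ι → ℝ) :
    ∃ c ∈ affineSpan ℝ (range z), ∃ k, ∀ i, dist c (z i) ^ 2 = k + w i := by
  classical
  let o : ι := Classical.arbitrary ι
  obtain ⟨x, hx, hxv⟩ := exists_mem_span_inner_eq
    ((affineIndependent_iff_linearIndependent_vsub ℝ z o).1 hz)
    fun i ↦ (dist (z i) (z o) ^ 2 + w o - w i) / 2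
  rw [← vectorSpan_range_eq_span_range_vsub_right_ne ℝ z o, ← direction_affineSpan] at hx
  have hinner (i : ι) : ⟪x, z i -ᵥ z o⟫ = (dist (z i) (z o) ^ 2 + w o - w i) / 2 := by
    rcases eq_or_ne i o with rfl | hi
    · simp
    · exact hxv ⟨i, hi⟩
  refine ⟨x +ᵥ z o, AffineSubspace.vadd_mem_of_mem_direction hx
    (subset_affineSpan ℝ _ (mem_range_self o)), ‖x‖ ^ 2 - w o, fun i ↦ ?_⟩
  have hsub : (x +ᵥ z o) -ᵥ z i = x - (z i -ᵥ z o) := by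
    rw [vadd_vsub_assoc, ← neg_vsub_eq_vsub_rev, ← sub_eq_add_neg]
  rw [dist_eq_norm_vsub V, hsub, norm_sub_sq_real, hinner, dist_eq_norm_vsub V]
  ring

theorem eq_of_mem_affineSpan_of_dist_sq_eq_add {s : Set P} {p q : P} {k : ℝ}
    (hp : p ∈ affineSpan ℝ s) (hq : q ∈ affineSpan ℝ s)
    (h : ∀ x ∈ s, dist p x ^ 2 = dist q x ^ 2 + k) : p = q := by
  have hinner (x : P) (hx : x ∈ s) : ⟪p -ᵥ q, q -ᵥ x⟫ = (k - dist p q ^ 2) / 2 := by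
    have hexp := norm_add_sq_real (p -ᵥ q) (q -ᵥ x)
    rw [vsub_add_vsub_cancel, ← dist_eq_norm_vsub, ← dist_eq_norm_vsub, ← dist_eq_norm_vsub,
      h x hx] at hexp
    linarith
  have horth : vectorSpan ℝ s ≤ (ℝ ∙ (p -ᵥ q))ᗮ := by
    refine span_le.2 ?_
    rintro _ ⟨x, hx, y, hy, rfl⟩
    rw [SetLike.mem_coe, mem_orthogonal_singleton_iff_inner_right]
    change ⟪p -ᵥ q, x -ᵥ y⟫ = 0
    rw [← vsub_sub_vsub_cancel_left x y q, inner_sub_right, hinner y hy, hinner x hx, sub_self]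
  have hpq : p -ᵥ q ∈ vectorSpan ℝ s :=
    direction_affineSpan ℝ s ▸ AffineSubspace.vsub_mem_direction hp hq
  rw [← vsub_eq_zero_iff_eq (G := V), ← inner_self_eq_zero (𝕜 := ℝ)]
  exact mem_orthogonal_singleton_iff_inner_right.1 (horth hpq)

theorem dist_lineMap_sq (c x y : P) (t : ℝ) :
    dist c (lineMap x y t) ^ 2 =
      (1 - t) * dist c x ^ 2 + t * dist c y ^ 2 - t * (1 - t) * dist x y ^ 2 := by
  have hline : c -ᵥ lineMap x y t = (c -ᵥ x) - t • (y -ᵥ x) := by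
    rw [lineMap_apply, vsub_vadd_eq_vsub_sub]
  have hcy : c -ᵥ y = (c -ᵥ x) - (y -ᵥ x) := (vsub_sub_vsub_cancel_right c y x).symm
  rw [dist_comm x y]
  simp only [dist_eq_norm_vsub V, hline, hcy, norm_sub_sq_real, inner_smul_right, norm_smul,
    mul_pow, Real.norm_eq_abs, sq_abs]
  ring

/-- The point where the spheres with centres `x`, `y` and radii `s`, `t` touch, provided that
`dist x y = s + t` and `s`, `t` are positive. For `s + t = 0` it is `x`, by division by zero. -/
noncomputable def tangencyPoint (x y : P) (s t : ℝ) : P := lineMap x y (s / (s + t))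

theorem dist_tangencyPoint_sq {c x y : P} {s t k : ℝ} (hst : s + t ≠ 0)
    (hxy : dist x y = s + t) (hx : dist c x ^ 2 = k + s ^ 2) (hy : dist c y ^ 2 = k + t ^ 2) :
    dist c (tangencyPoint x y s t) ^ 2 = k := by
  rw [tangencyPoint, dist_lineMap_sq, hxy, hx, hy]
  field_simp
  ring

theorem inner_vsub_vsub_eq_of_dist_sq_eq {c x y : P} {s t k : ℝ} (hxy : dist x y = s + t)
    (hx : dist c x ^ 2 = k + s ^ 2) (hy : dist c y ^ 2 = k + t ^ 2) :
    ⟪x -ᵥ c, y -ᵥ c⟫ = k - s * t := by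
  have hlaw := norm_sub_sq_real (x -ᵥ c) (y -ᵥ c)
  rw [vsub_sub_vsub_cancel_right] at hlaw
  simp only [← dist_eq_norm_vsub, dist_comm _ c, hxy, hx, hy] at hlaw
  linarith

theorem norm_sum_inv_radius_smul_sq [Fintype ι] {z : ι → P} {r : ι → ℝ} (hr : ∀ i, r i ≠ 0)
    (htan : ∀ i j, i ≠ j → dist (z i) (z j) = r i + r j) {c : P} {k : ℝ}
    (hc : ∀ i, dist c (z i) ^ 2 = k + r i ^ 2) :
    ‖∑ i, (r i)⁻¹ • (z i -ᵥ c)‖ ^ 2 =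
      k * (∑ i, (r i)⁻¹) ^ 2 - Fintype.card ι * (Fintype.card ι - 2) := by
  classical
  have hinner (i j : ι) : ⟪(r i)⁻¹ • (z i -ᵥ c), (r j)⁻¹ • (z j -ᵥ c)⟫ =
      k * ((r i)⁻¹ * (r j)⁻¹) - 1 + if i = j then 2 else 0 := by
    have hi := hr i
    have hj := hr j
    rw [real_inner_smul_left, real_inner_smul_right]
    split_ifs with hij
    · subst hij
      rw [real_inner_self_eq_norm_sq, ← dist_eq_norm_vsub, dist_comm, hc]
      field_simp
      ring
    · rw [inner_vsub_vsub_eq_of_dist_sq_eq (htan i j hij) (hc i) (hc j)]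
      field_simp
      ring
  simp only [← real_inner_self_eq_norm_sq, sum_inner, inner_sum, hinner, sum_add_distrib,
    sum_sub_distrib, ← mul_sum, ← sum_mul, sum_ite_eq', Finset.mem_univ, if_true, sum_const,
    card_univ, nsmul_eq_mul]
  ring

include V in
theorem pos_of_dist_sq_eq_add_radius_sq [Fintype ι] (hι : 2 < Fintype.card ι) {z : ι → P}
    {r : ι → ℝ} (hr : ∀ i, r i ≠ 0) (htan : ∀ i j, i ≠ j → dist (z i) (z j) = r i + r j)
    {c : P} {k : ℝ} (hc : ∀ i, dist c (z i) ^ 2 = k + r i ^ 2) : 0 < k := by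
  have hcard : (2 : ℝ) < Fintype.card ι := mod_cast hι
  have hsum : 0 < k * (∑ i, (r i)⁻¹) ^ 2 := by
    have hnorm := norm_sum_inv_radius_smul_sq hr htan hc
    have hprod : 0 < (Fintype.card ι : ℝ) * (Fintype.card ι - 2) :=
      mul_pos (by linarith) (sub_pos.2 hcard)
    linarith [sq_nonneg ‖∑ i, (r i)⁻¹ • (z i -ᵥ c)‖]
  exact pos_of_mul_pos_left hsum (sq_nonneg _)

theorem affineIndependent_of_dist_eq_radius_add_radius {z : Fin 3 → P} {r : Fin 3 → ℝ}
    (hr : ∀ i, 0 < r i) (htan : ∀ i j, i ≠ j → dist (z i) (z j) = r i + r j) :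
    AffineIndependent ℝ z := by
  have not_wbtw {i j k : Fin 3} (hij : i ≠ j) (hjk : j ≠ k) (hik : i ≠ k) :
      ¬ Wbtw ℝ (z i) (z j) (z k) := fun h ↦ by
    linarith [h.dist_add_dist, htan i j hij, htan j k hjk, htan i k hik, hr j]
  rw [affineIndependent_iff_not_collinear_of_ne (i₁ := 0) (i₂ := 1) (i₃ := 2) (by decide)
    (by decide) (by decide)]
  intro hcol
  rcases hcol.wbtw_or_wbtw_or_wbtw with h | h | h <;>
    exact not_wbtw (by decide) (by decide) (by decide) h

theorem exists_unique_dual_circle_general [Fintype ι] (hι : 2 < Fintype.card ι) {z : ι → P}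
    (hz : AffineIndependent ℝ z) {r : ι → ℝ} (hr : ∀ i, 0 < r i)
    (htan : ∀ i j, i ≠ j → dist (z i) (z j) = r i + r j) :
    ∃! cρ : P × ℝ,
      cρ.1 ∈ affineSpan ℝ (range z) ∧
      0 < cρ.2 ∧
      (∀ i j, i ≠ j → dist cρ.1 (tangencyPoint (z i) (z j) (r i) (r j)) = cρ.2) ∧
      (∀ i, dist cρ.1 (z i) ^ 2 = cρ.2 ^ 2 + r i ^ 2) := by
  have hne : Nonempty ι := Fintype.card_pos_iff.1 (by lia)
  obtain ⟨c, hcz, k, hc⟩ := exists_mem_affineSpan_dist_sq_eq_add hz fun i ↦ r i ^ 2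
  have hk : 0 < k := pos_of_dist_sq_eq_add_radius_sq hι (fun i ↦ (hr i).ne') htan hc
  refine ⟨(c, √k), ⟨hcz, Real.sqrt_pos.2 hk, fun i j hij ↦ ?_, fun i ↦ ?_⟩, ?_⟩
  · rw [← dist_tangencyPoint_sq (add_pos (hr i) (hr j)).ne' (htan i j hij) (hc i) (hc j),
      Real.sqrt_sq dist_nonneg]
  · rw [Real.sq_sqrt hk.le, hc]
  · rintro ⟨c', ρ⟩ ⟨hc'z, hρ, -, hc'⟩
    dsimp only at hc'z hρ hc'
    obtain rfl : c' = c := eq_of_mem_affineSpan_of_dist_sq_eq_add (k := ρ ^ 2 - k) hc'z hcz <|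
      forall_mem_range.2 fun i ↦ by linarith [hc i, hc' i]
    have hkρ : k = ρ ^ 2 := by linarith [hc hne.some, hc' hne.some]
    rw [hkρ, Real.sqrt_sq hρ.le]

end

/-- Existence and uniqueness of the dual circle: given three pairwise externally
tangent circles in the Euclidean plane, there is a unique circle orthogonal to all
three, meeting them exactly at their points of tangency. -/
theorem exists_unique_dual_circle
    (z : Fin 3 → EuclideanSpace ℝ (Fin 2)) (r : Fin 3 → ℝ)
    (hr : ∀ i, 0 < r i)
    (htan : ∀ i j, i ≠ j → dist (z i) (z j) = r i + r j) :
    ∃! cρ : EuclideanSpace ℝ (Fin 2) × ℝ,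
      0 < cρ.2 ∧
      (∀ i j, i ≠ j →
        dist cρ.1 (z i + (r i / (r i + r j)) • (z j - z i)) = cρ.2) ∧
      (∀ i, dist cρ.1 (z i) ^ 2 = cρ.2 ^ 2 + r i ^ 2) := by
  have hz := affineIndependent_of_dist_eq_radius_add_radius hr htan
  have hspan := hz.affineSpan_eq_top_iff_card_eq_finrank_add_one.2 (by simp)
  simpa [hspan, tangencyPoint, lineMap_apply, add_comm] using
    exists_unique_dual_circle_general (by simp) hz hr htan
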